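/- Consider the network of coupled linear subsystems x_i(t+1) = A_{ii} x_i(t) + B_{ii} u_i(t) + Σ_{j≠i} A_{ij} x_j(t) + Σ_{j≠i} B_{ij} u_j(t) + d_i(t) for i in a finite index set ℐ, with disturbance sets D_i = Z(0,G_i^d). Suppose for each i ∈ ℐ there exist matrices T_i ∈ ℝ^{n_i×k_i}, M_i ∈ ℝ^{m_i×k_i}, and a matrix G_i' such that: (a) Z(0, G_i^{extend}) ⊆ Z(0, G_i'), where G_i^{extend} is the horizontal concatenation of A_{ij} T_j (j ≠ i), B_{ij} M_j (j ≠ i), and G_i^d; (b) the horizontal concatenation [A_{ii} T_i + B_{ii} M_i , G_i'] equals [0 , T_i]; (c) Z(0,T_i) ⊆ X_i; and (d) Z(0,M_i) ⊆ U_i. Then for every i ∈ ℐ and every x_i ∈ Z(0,T_i) there exists u_i ∈ Z(0,M_i), depending only on x_i, such that for all x_j ∈ Z(0,T_j) and u_j ∈ Z(0,M_j) (j ≠ i) and all d_i ∈ Z(0,G_i^d), A_{ii} x_i + B_{ii} u_i + Σ_{j≠i} A_{ij} x_j + Σ_{j≠i} B_{ij} u_j + d_i ∈ Z(0,T_i).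 (That is, using an over-approximating reduced generator G_i' in place of G_i^{extend} still yields correct decentralized RCI sets.) -/

import Mathlib

/-!
Write `xᵢ = Tᵢ β` with `‖β‖ ≤ 1` and take `uᵢ = Mᵢ β`, which depends on `xᵢ` alone. The coupling
terms and the local disturbance together form a point of `Z(0, Gᵢᵉˣᵗᵉⁿᵈ)`: stacking the parameter
vectors of all neighbours gives a parameter vector for the concatenated generator
(`block_mulVec`, `mem_zono_scat`). By assumption this point is `Gᵢ' γ` with `‖γ‖ ≤ 1`, so the
successor state is `(Aᵢᵢ Tᵢ + Bᵢᵢ Mᵢ) β + Gᵢ' γ = [Aᵢᵢ Tᵢ + Bᵢᵢ Mᵢ, Gᵢ'] (β, γ) = [0, Tᵢ] (β, γ)`,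
which is `Tᵢ` applied to the last entries of `(β, γ)`, hence a point of `Z(0, Tᵢ)`
(`mem_zono_of_hcat_eq`).
-/

/-- The zonotope `Z(c,H) = {c + H b : b, ‖b‖_∞ ≤ 1}` (sup norm on `ι → ℝ`). -/
def zono {n : ℕ} {ι : Type*} [Fintype ι] (c : Fin n → ℝ) (H : Matrix (Fin n) ι ℝ) :
    Set (Fin n → ℝ) :=
  {x | ∃ b : ι → ℝ, ‖b‖ ≤ 1 ∧ x = c + H.mulVec b}

/-- Horizontal concatenation of two matrices with `Fin`-indexed columns. -/
def hcat {n k p : ℕ} {R : Type*} (A : Matrix (Fin n) (Fin k) R) (B : Matrix (Fin n) (Fin p) R) :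
    Matrix (Fin n) (Fin (k + p)) R :=
  Matrix.of fun i => Fin.append (A i) (B i)

/-- Horizontal concatenation of two matrices with arbitrary column index types. -/
def scat {n : ℕ} {α β : Type*} {R : Type*} (A : Matrix (Fin n) α R) (B : Matrix (Fin n) β R) :
    Matrix (Fin n) (α ⊕ β) R :=
  Matrix.of fun i => Sum.elim (A i) (B i)

/-- Minkowski sum of two sets. -/
def minkSum {α : Type*} [Add α] (A B : Set α) : Set α :=
  {x | ∃ a ∈ A, ∃ b ∈ B, x = a + b}
theorem mem_zono_zero {n : ℕ} {α : Type*} [Fintype α] {H : Matrix (Fin n) α ℝ} {x : Fin n → ℝ} :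
    x ∈ zono 0 H ↔ ∃ b : α → ℝ, ‖b‖ ≤ 1 ∧ x = H.mulVec b := by
  simp [zono]

/-- The Minkowski sum of two centred zonotopes lies in the zonotope of the concatenated
generators. -/
theorem mem_zono_scat {n : ℕ} {α β : Type*} [Fintype α] [Fintype β]
    {P : Matrix (Fin n) α ℝ} {Q : Matrix (Fin n) β ℝ} {x y : Fin n → ℝ}
    (hx : x ∈ zono 0 P) (hy : y ∈ zono 0 Q) : x + y ∈ zono 0 (scat P Q) := by
  obtain ⟨a, ha, rfl⟩ := mem_zono_zero.1 hx
  obtain ⟨b, hb, rfl⟩ := mem_zono_zero.1 hy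
  refine mem_zono_zero.2 ⟨Sum.elim a b, ?_, ?_⟩
  · rw [pi_norm_le_iff_of_nonneg zero_le_one] at ha hb ⊢
    rintro (j | j)
    · exact ha j
    · exact hb j
  · exact (Matrix.fromCols_mulVec_sumElim P Q a b).symm

theorem hcat_mulVec {n k p : ℕ} (P : Matrix (Fin n) (Fin k) ℝ) (Q : Matrix (Fin n) (Fin p) ℝ)
    (c : Fin (k + p) → ℝ) :
    (hcat P Q).mulVec c
      = P.mulVec (fun j => c (Fin.castAdd p j)) + Q.mulVec (fun j => c (Fin.natAdd k j)) := by
  ext r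
  simp [Matrix.mulVec, dotProduct, hcat, Fin.sum_univ_add]

/-- The horizontal concatenation of the blocks `Cⱼ Tⱼ`, `j ≠ i`, acts on a stacked vector
`(βⱼ)ⱼ` as `∑ Cⱼ (Tⱼ βⱼ)`. -/
theorem block_mulVec {ι : Type*} [Fintype ι] [DecidableEq ι] {n : ℕ} {nd kd : ι → ℕ} (i : ι)
    (C : ∀ j : ι, Matrix (Fin n) (Fin (nd j)) ℝ)
    (T : ∀ j : ι, Matrix (Fin (nd j)) (Fin (kd j)) ℝ) (β : ∀ j : ι, Fin (kd j) → ℝ) :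
    (Matrix.of fun r (jl : (j : {j : ι // j ≠ i}) × Fin (kd j.1)) =>
        (C jl.1.1 * T jl.1.1) r jl.2).mulVec (fun jl => β jl.1.1 jl.2)
      = ∑ j ∈ Finset.univ.erase i, (C j).mulVec ((T j).mulVec (β j)) := by
  ext r
  have hsub (f : ι → ℝ) : ∑ j ∈ Finset.univ.erase i, f j = ∑ j : {j : ι // j ≠ i}, f j.1 :=
    Finset.sum_subtype (Finset.univ.erase i) (by simp) f
  rw [Finset.sum_apply, hsub]
  simp only [Matrix.mulVec_mulVec]
  simp only [Matrix.mulVec, dotProduct, Matrix.of_apply, Fintype.sum_sigma]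

theorem mem_zono_block {ι : Type*} [Fintype ι] [DecidableEq ι] {n : ℕ} {nd kd : ι → ℕ} (i : ι)
    (C : ∀ j : ι, Matrix (Fin n) (Fin (nd j)) ℝ)
    (T : ∀ j : ι, Matrix (Fin (nd j)) (Fin (kd j)) ℝ) (xs : ∀ j : ι, Fin (nd j) → ℝ)
    (hxs : ∀ j : ι, j ≠ i → xs j ∈ zono 0 (T j)) :
    ∑ j ∈ Finset.univ.erase i, (C j).mulVec (xs j)
      ∈ zono 0 (Matrix.of fun r (jl : (j : {j : ι // j ≠ i}) × Fin (kd j.1)) =>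
        (C jl.1.1 * T jl.1.1) r jl.2) := by
  -- A parameter vector is chosen for every index, so that the choice function is total in `j`;
  -- its value at `j = i` plays no role.
  have h : ∀ j : ι, ∃ b : Fin (kd j) → ℝ, j ≠ i → ‖b‖ ≤ 1 ∧ xs j = (T j).mulVec b := by
    intro j
    by_cases hj : j = i
    · exact ⟨0, fun h => absurd hj h⟩
    · obtain ⟨b, hb⟩ := mem_zono_zero.1 (hxs j hj)
      exact ⟨b, fun _ => hb⟩
  choose β hβ using h
  refine mem_zono_zero.2 ⟨fun jl => β jl.1.1 jl.2, ?_, ?_⟩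
  · rw [pi_norm_le_iff_of_nonneg zero_le_one]
    exact fun jl => (norm_le_pi_norm _ _).trans (hβ jl.1.1 jl.1.2).1
  · rw [block_mulVec]
    refine Finset.sum_congr rfl fun j hj => ?_
    rw [(hβ j (Finset.ne_of_mem_erase hj)).2]

/-- If `[P, Q] = [0, T]`, then `P b + w ∈ Z(0, T)` for `‖b‖ ≤ 1` and `w ∈ Z(0, Q)`. The blocks on
the two sides need not be aligned; the parameter vector of the result is the tail of `(b, c)`. -/
theorem mem_zono_of_hcat_eq {n k p : ℕ} {P T : Matrix (Fin n) (Fin k) ℝ}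
    {Q : Matrix (Fin n) (Fin p) ℝ}
    (h : hcat P Q = Matrix.submatrix (hcat (0 : Matrix (Fin n) (Fin p) ℝ) T) id
      (Fin.cast (Nat.add_comm k p)))
    {b : Fin k → ℝ} (hb : ‖b‖ ≤ 1) {w : Fin n → ℝ} (hw : w ∈ zono 0 Q) :
    P.mulVec b + w ∈ zono 0 T := by
  obtain ⟨c, hc, rfl⟩ := mem_zono_zero.1 hw
  have key : P.mulVec b + Q.mulVec c = (hcat P Q).mulVec (Fin.append b c) := by
    simp [hcat_mulVec]
  have hsub : (Matrix.submatrix (hcat (0 : Matrix (Fin n) (Fin p) ℝ) T) id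
      (finCongr (Nat.add_comm k p))).mulVec (Fin.append b c)
      = (hcat 0 T).mulVec (Fin.append b c ∘ (finCongr (Nat.add_comm k p)).symm) :=
    Matrix.submatrix_mulVec_equiv _ _ _ _
  have hnorm : ∀ j, ‖Fin.append b c j‖ ≤ 1 := by
    intro j
    refine Fin.addCases (fun l => ?_) (fun l => ?_) j
    · simpa using (norm_le_pi_norm b l).trans hb
    · simpa using (norm_le_pi_norm c l).trans hc
  rw [key, h]
  refine mem_zono_zero.2 ⟨fun j =>
    (Fin.append b c ∘ (finCongr (Nat.add_comm k p)).symm) (Fin.natAdd p j), ?_, ?_⟩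
  · rw [pi_norm_le_iff_of_nonneg zero_le_one]
    exact fun j => hnorm _
  · refine hsub.trans ?_
    rw [hcat_mulVec, Matrix.zero_mulVec, zero_add]

/-- Compositional decentralized RCI sets with a reduced
(over-approximating) disturbance generator: if `Z(0,Gᵢᵉˣᵗᵉⁿᵈ) ⊆ Z(0,Gᵢ')` and
`[Aᵢᵢ Tᵢ + Bᵢᵢ Mᵢ , Gᵢ'] = [0 , Tᵢ]` with `Z(0,Tᵢ) ⊆ Xᵢ`, `Z(0,Mᵢ) ⊆ Uᵢ`, then the
decentralized one-step invariance holds, with `uᵢ` depending only on `xᵢ`. -/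
theorem decentralized_rci_of_reduced_contract
    {ι : Type*} [Fintype ι] [DecidableEq ι]
    (nd md pd kd pd' : ι → ℕ)
    (A : ∀ i j : ι, Matrix (Fin (nd i)) (Fin (nd j)) ℝ)
    (B : ∀ i j : ι, Matrix (Fin (nd i)) (Fin (md j)) ℝ)
    (X : ∀ i : ι, Set (Fin (nd i) → ℝ)) (U : ∀ i : ι, Set (Fin (md i) → ℝ))
    (Gd : ∀ i : ι, Matrix (Fin (nd i)) (Fin (pd i)) ℝ)
    (G' : ∀ i : ι, Matrix (Fin (nd i)) (Fin (pd' i)) ℝ)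
    (T : ∀ i : ι, Matrix (Fin (nd i)) (Fin (kd i)) ℝ)
    (M : ∀ i : ι, Matrix (Fin (md i)) (Fin (kd i)) ℝ)
    (ha : ∀ i : ι,
      zono 0
        (scat (Matrix.of fun r (jl : (j : {j : ι // j ≠ i}) × Fin (kd j.1)) =>
                (A i jl.1.1 * T jl.1.1) r jl.2)
          (scat (Matrix.of fun r (jl : (j : {j : ι // j ≠ i}) × Fin (kd j.1)) =>
                  (B i jl.1.1 * M jl.1.1) r jl.2)
            (Gd i)))
        ⊆ zono 0 (G' i))
    (hb : ∀ i : ι,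
      hcat (A i i * T i + B i i * M i) (G' i)
        = Matrix.submatrix (hcat (0 : Matrix (Fin (nd i)) (Fin (pd' i)) ℝ) (T i)) id
            (Fin.cast (Nat.add_comm (kd i) (pd' i))))
    (hcX : ∀ i : ι, zono 0 (T i) ⊆ X i)
    (hdU : ∀ i : ι, zono 0 (M i) ⊆ U i) :
    ∀ i : ι, ∀ xi ∈ zono 0 (T i), ∃ ui ∈ zono 0 (M i),
      ∀ (xs : ∀ j : ι, Fin (nd j) → ℝ) (us : ∀ j : ι, Fin (md j) → ℝ),
        (∀ j : ι, j ≠ i → xs j ∈ zono 0 (T j)) →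
        (∀ j : ι, j ≠ i → us j ∈ zono 0 (M j)) →
        ∀ di ∈ zono 0 (Gd i),
          (A i i).mulVec xi + (B i i).mulVec ui
            + (∑ j ∈ Finset.univ.erase i, (A i j).mulVec (xs j))
            + (∑ j ∈ Finset.univ.erase i, (B i j).mulVec (us j)) + di
          ∈ zono 0 (T i) := by
  intro i xi hxi
  obtain ⟨b, hb1, rfl⟩ := mem_zono_zero.1 hxi
  refine ⟨(M i).mulVec b, mem_zono_zero.2 ⟨b, hb1, rfl⟩, fun xs us hxs hus di hdi => ?_⟩
  have hw := ha i (mem_zono_scat (mem_zono_block i (A i) T xs hxs)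
    (mem_zono_scat (mem_zono_block i (B i) M us hus) hdi))
  have hmem := mem_zono_of_hcat_eq (hb i) hb1 hw
  simpa only [Matrix.add_mulVec, Matrix.mulVec_mulVec, add_assoc] using hmem
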